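/- Let n ≥ 9 be a natural number, G either Alt_n or Sym_n, c ∈ G a 3-cycle, 0 < ε < 1, and 3/4 ≤ α ≤ 4/5. Set R := ⌈(1/2)·log_α(ε)⌉, where log_α(ε) = log(ε)/log(α) with log the natural logarithm. Let r_1, …, r_R be independent, uniformly distributed random elements of the set of all elements of G that are pre-bolstering with respect to c, and for each i let k_i be the (unique) integer such that r_i is k_i-pre-bolstering with respect to c. Then with probability at least 1 − ε there is at least one j with k_j ≥ max(9, ⌈αn⌉ + 1). -/

import Mathlib

open scoped Classical

/-- `r` is `k`-pre-bolstering with respect to the `3`-cycle `c` if, for some labeling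
`supp c = {u,v,w}`, distinct points `a 0, …, a (α−1), b 0, …, b (β−1)` outside `supp c`
with `α, β ≥ 2` and `k = α + β + 3`, the disjoint cycle form of `r` is
`(w,u,a_1,…,a_α)(v,b_1,…,b_β)(⋯)` or `(w,u,a_1,…,a_α,v,b_1,…,b_β)(⋯)`, where `(⋯)` is an
arbitrary permutation of the remaining points. -/
def IsKPreBolstering {n : ℕ} (k : ℕ) (c r : Equiv.Perm (Fin n)) : Prop :=
  ∃ (u v w : Fin n) (α β : ℕ) (a b : ℕ → Fin n),
    c.support = {u, v, w} ∧ 2 ≤ α ∧ 2 ≤ β ∧ k = α + β + 3 ∧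
    (∀ i < α, ∀ j < α, a i = a j → i = j) ∧
    (∀ i < β, ∀ j < β, b i = b j → i = j) ∧
    (∀ i < α, ∀ j < β, a i ≠ b j) ∧
    (∀ i < α, a i ∉ c.support) ∧ (∀ j < β, b j ∉ c.support) ∧
    r w = u ∧ r u = a 0 ∧ r v = b 0 ∧
    (∀ i, i + 1 < α → r (a i) = a (i + 1)) ∧
    (∀ j, j + 1 < β → r (b j) = b (j + 1)) ∧
    ((r (a (α - 1)) = w ∧ r (b (β - 1)) = v) ∨
     (r (a (α - 1)) = v ∧ r (b (β - 1)) = w))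

/-- `r` is pre-bolstering with respect to `c` if it is `k`-pre-bolstering for some `k`. -/
def IsPreBolstering {n : ℕ} (c r : Equiv.Perm (Fin n)) : Prop :=
  ∃ k, IsKPreBolstering k c r

/-! Fix a labeling `supp c = {u, v, w}` and lengths `α`, `β`. Left multiplication by the
transposition `(v w)` exchanges the two disjoint cycle forms and, being odd, also pairs the even
with the odd pre-bolstering elements. Hence their number in `G` is determined by the number of
permutations of the second form, in which `u` and `v` lie at times `1` and `α + 2` on a cycle of
length `α + β + 3` through `w`. There are `(n - 3)!` of these: choosing the other points of the
cycle in order and then the images of all remaining points amounts to ordering the `n - 3` points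
outside `supp c`. The count does not depend on `α` and `β`, so all pairs `α, β ≥ 2` with
`α + β + 3 ≤ n` are equally likely, and the share of elements with `k < q + 7` is
`q (q + 1) / ((n - 6) (n - 5))`. For `q + 7 = max 9 (⌈αn⌉ + 1)`, with `α` now the parameter of the
theorem, this share is at most `α ^ 2`, and `R` independent draws all miss with probability at most
`α ^ (2 R) ≤ ε`. -/

open Equiv Function

theorem exists_perm_apply_embedding_eq {κ X : Type*} [Finite X] (s t : κ ↪ X) :
    ∃ g : Perm X, ∀ a, g (s a) = t a := by
  let e : Set.range s ≃ Set.range t :=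
    (ofInjective s s.injective).symm.trans (ofInjective t t.injective)
  refine ⟨e.extendSubtype, fun a => ?_⟩
  rw [e.extendSubtype_apply_of_mem (s a) (Set.mem_range_self a)]
  simp [e]

section Embeddings

variable {ι κ X : Type*} [Fintype ι] [Fintype κ] [Fintype X]

theorem card_embedding_extending (j : κ ↪ ι) (t : κ ↪ X) :
    Nat.card {s : ι ↪ X // ∀ a, s (j a) = t a} =
      (Fintype.card X - Fintype.card κ).descFactorial (Fintype.card ι - Fintype.card κ) := by
  have card_fiber (t' : κ ↪ X) : Nat.card {s : ι ↪ X // j.trans s = t'} =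
      Nat.card {s : ι ↪ X // ∀ a, s (j a) = t a} := by
    obtain ⟨g, hg⟩ := exists_perm_apply_embedding_eq t' t
    refine Nat.card_congr ((embeddingCongr (Equiv.refl ι) g).subtypeEquiv fun s => ?_)
    simp [Function.Embedding.ext_iff, ← hg]
  have card_total : Nat.card (κ ↪ X) * Nat.card {s : ι ↪ X // ∀ a, s (j a) = t a} =
      Nat.card (ι ↪ X) := by
    rw [← Nat.card_congr (sigmaFiberEquiv fun s : ι ↪ X => j.trans s), Nat.card_sigma,
      Finset.sum_congr rfl fun t' _ => card_fiber t', Finset.sum_const, Finset.card_univ,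
      smul_eq_mul, Nat.card_eq_fintype_card (α := κ ↪ X)]
  have card_pos : 0 < Nat.card (κ ↪ X) := Nat.card_pos_iff.mpr ⟨⟨t⟩, inferInstance⟩
  refine Nat.eq_of_mul_eq_mul_left card_pos (card_total.trans ?_)
  rw [Nat.card_eq_fintype_card, Nat.card_eq_fintype_card, Fintype.card_embedding_eq,
    Fintype.card_embedding_eq, mul_comm,
    Nat.descFactorial_mul_descFactorial (Fintype.card_le_of_embedding j)]

theorem card_perm_extending (s t : κ ↪ X) :
    Nat.card {r : Perm X // ∀ a, r (s a) = t a} =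
      (Fintype.card X - Fintype.card κ).factorial := by
  rw [← Nat.descFactorial_self, ← card_embedding_extending s t]
  exact Nat.card_congr ((embeddingEquivOfFinite X).symm.subtypeEquiv fun r => Iff.rfl)

theorem card_embedding_perm_intertwining (σ : Perm ι) (j : κ ↪ ι) (t : κ ↪ X)
    (hι : Fintype.card ι ≤ Fintype.card X) :
    Nat.card {p : (ι ↪ X) × Perm X //
        (∀ a, p.1 (j a) = t a) ∧ ∀ i, p.2 (p.1 i) = p.1 (σ i)} =
      (Fintype.card X - Fintype.card κ).factorial := by
  have hκ : Fintype.card κ ≤ Fintype.card ι := Fintype.card_le_of_embedding j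
  calc Nat.card _
    _ = Nat.card (Σ s : {s : ι ↪ X // ∀ a, s (j a) = t a},
          {r : Perm X // ∀ i, r (s.1 i) = (σ.toEmbedding.trans s.1) i}) :=
        Nat.card_congr
          { toFun p := ⟨⟨p.1.1, p.2.1⟩, p.1.2, p.2.2⟩
            invFun q := ⟨(q.1.1, q.2.1), q.1.2, q.2.2⟩ }
    _ = (Fintype.card X - Fintype.card κ).descFactorial (Fintype.card ι - Fintype.card κ) *
          (Fintype.card X - Fintype.card ι).factorial := by
        rw [Nat.card_sigma]
        simp only [card_perm_extending]
        rw [Finset.sum_const, Finset.card_univ, smul_eq_mul, ← Nat.card_eq_fintype_card,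
          card_embedding_extending]
    _ = _ := by
        rw [mul_comm, show Fintype.card X - Fintype.card ι =
          Fintype.card X - Fintype.card κ - (Fintype.card ι - Fintype.card κ) by omega]
        exact Nat.factorial_mul_descFactorial (by omega)

end Embeddings

theorem card_subtype_eq_two_mul {Y : Type*} [Finite Y] (e : Perm Y) {p q : Y → Prop}
    (hp : ∀ y, p (e y) ↔ p y) (hq : ∀ y, p y → (q (e y) ↔ ¬ q y)) :
    Nat.card {y // p y} = 2 * Nat.card {y // q y ∧ p y} := by
  have card_not : Nat.card {y // ¬ q y ∧ p y} = Nat.card {y // q y ∧ p y} :=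
    Nat.card_congr (e.subtypeEquiv fun y => by grind)
  have card_split : Nat.card {y // p y} =
      Nat.card {y // q y ∧ p y} + Nat.card {y // ¬ q y ∧ p y} := by
    have := Fintype.ofFinite Y
    simp only [Nat.card_eq_fintype_card, Fintype.card_subtype]
    rw [← Finset.card_filter_add_card_filter_not q, Finset.filter_filter, Finset.filter_filter]
    simp only [and_comm]
  omega

theorem index_mul_card_subtype_mem {G : Type*} [Group G] [Finite G] {H : Subgroup G} {τ : G}
    (hH : H = ⊤ ∨ H.index = 2 ∧ τ ∉ H) {p : G → Prop} (hp : ∀ g, p (τ * g) ↔ p g) :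
    H.index * Nat.card {g // g ∈ H ∧ p g} = Nat.card {g // p g} := by
  rcases hH with rfl | ⟨hH, hτ⟩
  · simp
  · rw [hH, card_subtype_eq_two_mul (Equiv.mulLeft τ) hp fun g _ => ?_]
    simp [Subgroup.mul_mem_iff_of_index_two hH, hτ]

/-- The orbit of `x` under `f` visits exactly `m` points outside `S`, at the times `1, …, m`, before
it first returns to `S`, at time `m + 1`. The starting point `x` need not lie in `S`. -/
structure IsExcursion {X : Type*} (f : X → X) (S : Set X) (x : X) (m : ℕ) : Prop where
  iterate_notMem : ∀ i < m, f^[i + 1] x ∉ S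
  return_mem : f^[m + 1] x ∈ S

namespace IsExcursion

variable {X : Type*} {f g : X → X} {S : Set X} {x y : X} {m l : ℕ}

theorem of_path {a : ℕ → X} (hm : 0 < m)
    (ha : ∀ i < m, a i ∉ S) (h₀ : f x = a 0) (hstep : ∀ i, i + 1 < m → f (a i) = a (i + 1))
    (hlast : f (a (m - 1)) ∈ S) : IsExcursion f S x m := by
  have iterate_eq {i : ℕ} (hi : i < m) : f^[i + 1] x = a i := by
    induction i with
    | zero => exact h₀
    | succ i ih => rw [iterate_succ_apply', ih (by omega), hstep i hi]
  refine ⟨fun i hi => iterate_eq hi ▸ ha i hi, ?_⟩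
  obtain ⟨m, rfl⟩ := Nat.exists_eq_add_of_le' hm
  rwa [iterate_succ_apply', iterate_eq m.lt_succ_self]

theorem length_unique (hm : IsExcursion f S x m) (hl : IsExcursion f S x l) : m = l := by
  rcases lt_trichotomy m l with h | h | h
  · exact absurd hm.return_mem (hl.iterate_notMem m h)
  · exact h
  · exact absurd hl.return_mem (hm.iterate_notMem l h)

theorem iterate_injOn (hm : IsExcursion f S x m) :
    Set.InjOn (fun i => f^[i + 1] x) (Set.Iio m) := by
  -- Two equal points at times `i < j` would return to `S` simultaneously.
  have ne_of_lt {i j : ℕ} (hij : i < j) (hj : j < m) : f^[i + 1] x ≠ f^[j + 1] x := by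
    intro heq
    refine hm.iterate_notMem (m - j + i) (by omega) ?_
    have := hm.return_mem
    rwa [show m + 1 = m - j + (j + 1) by omega, iterate_add_apply, ← heq,
      ← iterate_add_apply] at this
  intro i hi j hj heq
  rcases lt_trichotomy i j with h | h | h
  · exact absurd heq (ne_of_lt h hj)
  · exact h
  · exact absurd heq.symm (ne_of_lt h hi)

theorem iterate_ne_iterate_of_le (hf : Injective f) (hl : IsExcursion f S y l) (hx : x ∈ S)
    (hxy : x ≠ y) {i j : ℕ} (hij : i ≤ j) (hj : j ≤ l) : f^[i + 1] x ≠ f^[j + 1] y := by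
  intro heq
  obtain ⟨d, rfl⟩ := Nat.exists_eq_add_of_le hij
  rw [add_right_comm, iterate_add_apply f (i + 1) d] at heq
  have hxd : x = f^[d] y := hf.iterate (i + 1) heq
  cases d with
  | zero => exact hxy hxd
  | succ d => exact hl.iterate_notMem d (by omega) (hxd ▸ hx)

theorem iterate_ne_iterate (hf : Injective f) (hm : IsExcursion f S x m)
    (hl : IsExcursion f S y l) (hx : x ∈ S) (hy : y ∈ S) (hxy : x ≠ y) {i j : ℕ} (hi : i ≤ m)
    (hj : j ≤ l) : f^[i + 1] x ≠ f^[j + 1] y := by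
  rcases le_total i j with hij | hji
  · exact hl.iterate_ne_iterate_of_le hf hx hxy hij hj
  · exact (hm.iterate_ne_iterate_of_le hf hy hxy.symm hji hi).symm

theorem return_ne_apply (hf : Injective f) (hm : IsExcursion f S x m) (hx : x ∈ S) (hy : y ∈ S)
    (hfy : f y ∈ S) (hxy : x ≠ y) : f^[m + 1] x ≠ f y :=
  have excursion_y : IsExcursion f S y 0 := ⟨fun i hi => absurd hi i.not_lt_zero, hfy⟩
  hm.iterate_ne_iterate hf excursion_y hx hy hxy le_rfl le_rfl

theorem iterate_comp (hm : IsExcursion f S x m) (hg : ∀ y ∉ S, g y = y) {i : ℕ} (hi : i ≤ m) :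
    (g ∘ f)^[i] x = f^[i] x := by
  induction i with
  | zero => rfl
  | succ i ih =>
    rw [iterate_succ_apply', ih (by omega), comp_apply, ← iterate_succ_apply' f,
      hg _ (hm.iterate_notMem i hi)]

theorem iterate_comp_return (hm : IsExcursion f S x m) (hg : ∀ y ∉ S, g y = y) :
    (g ∘ f)^[m + 1] x = g (f^[m + 1] x) := by
  rw [iterate_succ_apply', hm.iterate_comp hg le_rfl, comp_apply, ← iterate_succ_apply' f]

theorem comp (hm : IsExcursion f S x m) (hg : ∀ y ∉ S, g y = y) (hgS : Set.MapsTo g S S) :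
    IsExcursion (g ∘ f) S x m where
  iterate_notMem i hi := by
    rw [hm.iterate_comp hg hi]
    exact hm.iterate_notMem i hi
  return_mem := by
    rw [hm.iterate_comp_return hg]
    exact hgS hm.return_mem

end IsExcursion

/-- The pre-bolstering condition for a fixed labeling `{u, v, w}` of the support of the `3`-cycle
and fixed lengths `α`, `β`. The points `a₁, …, a_α` and `b₁, …, b_β` are read off as the excursions
of `r` from `u` and `v`; the two disjoint cycle forms are the two ways these excursions can end, see
`IsPreBolsteringAt.returns`. -/
structure IsPreBolsteringAt {X : Type*} (r : Perm X) (u v w : X) (α β : ℕ) : Prop where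
  u_ne_v : u ≠ v
  u_ne_w : u ≠ w
  v_ne_w : v ≠ w
  apply_w : r w = u
  excursion_u : IsExcursion r {u, v, w} u α
  excursion_v : IsExcursion r {u, v, w} v β

namespace IsPreBolsteringAt

variable {X : Type*} {r : Perm X} {u v w : X} {α β : ℕ}

theorem iterate_w_add_two (h : IsPreBolsteringAt r u v w α β) (i : ℕ) :
    r^[i + 2] w = r^[i + 1] u := by
  rw [iterate_succ_apply, h.apply_w]

theorem returns (h : IsPreBolsteringAt r u v w α β) :
    (r^[α + 1] u = v ∧ r^[β + 1] v = w) ∨ (r^[α + 1] u = w ∧ r^[β + 1] v = v) := by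
  have apply_w_mem : r w ∈ ({u, v, w} : Set X) := by simp [h.apply_w]
  have return_u_ne : r^[α + 1] u ≠ r w :=
    h.excursion_u.return_ne_apply r.injective (by simp) (by simp) apply_w_mem h.u_ne_w
  have return_v_ne : r^[β + 1] v ≠ r w :=
    h.excursion_v.return_ne_apply r.injective (by simp) (by simp) apply_w_mem h.v_ne_w
  have returns_ne : r^[α + 1] u ≠ r^[β + 1] v :=
    h.excursion_u.iterate_ne_iterate r.injective h.excursion_v (by simp) (by simp) h.u_ne_v
      le_rfl le_rfl
  have return_u_mem := h.excursion_u.return_mem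
  have return_v_mem := h.excursion_v.return_mem
  simp only [Set.mem_insert_iff, Set.mem_singleton_iff] at return_u_mem return_v_mem
  grind [h.apply_w]

theorem apply_mem_iff (h : IsPreBolsteringAt r u v w α β) (hα : 0 < α) (hβ : 0 < β) {x : X}
    (hx : x ∈ ({u, v, w} : Set X)) : r x ∈ ({u, v, w} : Set X) ↔ x = w := by
  refine ⟨fun hrx => ?_, ?_⟩
  · rcases hx with rfl | rfl | rfl
    · exact absurd hrx (h.excursion_u.iterate_notMem 0 hα)
    · exact absurd hrx (h.excursion_v.iterate_notMem 0 hβ)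
    · rfl
  · rintro rfl
    simp [h.apply_w]

theorem unique {u' v' w' : X} {α' β' : ℕ} (h : IsPreBolsteringAt r u v w α β)
    (h' : IsPreBolsteringAt r u' v' w' α' β') (hα : 0 < α) (hβ : 0 < β)
    (hS : ({u, v, w} : Set X) = {u', v', w'}) :
    (u = u' ∧ v = v' ∧ w = w') ∧ α = α' ∧ β = β' := by
  have w_eq : w' = w := (h.apply_mem_iff hα hβ (by simp [hS])).mp (by simp [hS, h'.apply_w])
  subst w_eq
  have u_eq : u = u' := h.apply_w.symm.trans h'.apply_w
  subst u_eq
  have v_mem : v ∈ ({u, v', w'} : Set X) := hS ▸ by simp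
  obtain rfl : v = v' := by
    rcases v_mem with hv | hv | hv
    · exact absurd hv.symm h.u_ne_v
    · exact hv
    · exact absurd hv h.v_ne_w
  exact ⟨⟨rfl, rfl, rfl⟩, h.excursion_u.length_unique h'.excursion_u,
    h.excursion_v.length_unique h'.excursion_v⟩

variable [DecidableEq X]

theorem swap_apply_of_notMem {y : X} (hy : y ∉ ({u, v, w} : Set X)) :
    swap v w y = y :=
  swap_apply_of_ne_of_ne (by rintro rfl; simp at hy) (by rintro rfl; simp at hy)

theorem swap_mul (h : IsPreBolsteringAt r u v w α β) :
    IsPreBolsteringAt (swap v w * r) u v w α β := by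
  have swap_mapsTo : Set.MapsTo (swap v w) {u, v, w} {u, v, w} := by
    rintro y (rfl | rfl | rfl) <;> simp [swap_apply_of_ne_of_ne h.u_ne_v h.u_ne_w]
  exact {
    h with
    apply_w := by simp [h.apply_w, swap_apply_of_ne_of_ne h.u_ne_v h.u_ne_w]
    excursion_u := h.excursion_u.comp (fun _ => swap_apply_of_notMem) swap_mapsTo
    excursion_v := h.excursion_v.comp (fun _ => swap_apply_of_notMem) swap_mapsTo }

theorem swap_mul_iff :
    IsPreBolsteringAt (swap v w * r) u v w α β ↔ IsPreBolsteringAt r u v w α β :=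
  ⟨fun h => by simpa using h.swap_mul, swap_mul⟩

theorem swap_mul_return_u_eq_v_iff (h : IsPreBolsteringAt r u v w α β) :
    (swap v w * r)^[α + 1] u = v ↔ r^[α + 1] u ≠ v := by
  rw [Perm.coe_mul, h.excursion_u.iterate_comp_return fun _ => swap_apply_of_notMem]
  rcases h.returns with ⟨hu, -⟩ | ⟨hu, -⟩ <;> simp [hu, h.v_ne_w.symm]

end IsPreBolsteringAt

theorem minimalPeriod_eq_of_forall_iterate_ne {X : Type*} {f : X → X} {x : X} {k : ℕ} (hk : 0 < k)
    (hfk : f^[k] x = x) (hne : ∀ i, 0 < i → i < k → f^[i] x ≠ x) : minimalPeriod f x = k := by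
  have periodic : IsPeriodicPt f k x := hfk
  refine le_antisymm (periodic.minimalPeriod_le hk) (not_lt.mp fun hlt => ?_)
  exact hne _ (periodic.minimalPeriod_pos hk) hlt iterate_minimalPeriod

section CycleThrough

variable {X : Type*} {k : ℕ}

theorem iterate_apply_embedding_zero {r : X → X} {s : Fin (k + 1) → X}
    (hs : ∀ i, r (s i) = s (finRotate _ i)) (i : Fin (k + 1)) : r^[i] (s 0) = s i := by
  obtain ⟨i, hi⟩ := i
  induction i with
  | zero => rfl
  | succ i ih =>
    rw [iterate_succ_apply']
    simp only at ih
    rw [ih (by omega), hs, finRotate_of_lt (by omega)]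

theorem minimalPeriod_embedding_zero {r : X → X} {s : Fin (k + 1) ↪ X}
    (hs : ∀ i, r (s i) = s (finRotate _ i)) : minimalPeriod r (s 0) = k + 1 := by
  refine minimalPeriod_eq_of_forall_iterate_ne k.succ_pos ?_ fun i hi₀ hi => ?_
  · rw [iterate_succ_apply', show r^[k] (s 0) = s (Fin.last k) from
      iterate_apply_embedding_zero hs (Fin.last k), hs, finRotate_last]
  · rw [iterate_apply_embedding_zero hs ⟨i, hi⟩, s.injective.ne_iff, Fin.ne_iff_vne]
    exact hi₀.ne'

theorem exists_embedding_of_minimalPeriod_eq {r : X → X} {x : X} (hr : minimalPeriod r x = k + 1) :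
    ∃ s : Fin (k + 1) ↪ X, (∀ i, s i = r^[i] x) ∧ ∀ i, r (s i) = s (finRotate _ i) := by
  refine ⟨⟨fun i => r^[i] x, fun i j hij => Fin.ext ?_⟩, fun i => rfl, fun i => ?_⟩
  · exact (iterate_eq_iterate_iff_of_lt_minimalPeriod (i.2.trans_eq hr.symm)
      (j.2.trans_eq hr.symm)).mp hij
  · change r (r^[i] x) = r^[finRotate _ i] x
    rw [← iterate_succ_apply' r]
    obtain hi | hi := i.le_last.lt_or_eq
    · rw [coe_finRotate_of_ne_last hi.ne]
    · have periodic : r^[k + 1] x = x := hr ▸ iterate_minimalPeriod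
      rw [hi, finRotate_last, Fin.val_last, periodic]
      rfl

theorem card_perm_cycle_through {κ : Type*} [Fintype κ] [Fintype X] (j : κ ↪ Fin (k + 1))
    (t : κ ↪ X) {a₀ : κ} (ha₀ : j a₀ = 0) (hk : k + 1 ≤ Fintype.card X) :
    Nat.card {r : Perm X // minimalPeriod r (t a₀) = k + 1 ∧ ∀ a, r^[j a] (t a₀) = t a} =
      (Fintype.card X - Fintype.card κ).factorial := by
  rw [← card_embedding_perm_intertwining (finRotate (k + 1)) j t (by simpa using hk)]
  let forgetEmbedding (p : {p : (Fin (k + 1) ↪ X) × Perm X //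
      (∀ a, p.1 (j a) = t a) ∧ ∀ i, p.2 (p.1 i) = p.1 (finRotate _ i)}) :
      {r : Perm X // minimalPeriod r (t a₀) = k + 1 ∧ ∀ a, r^[j a] (t a₀) = t a} :=
    ⟨p.1.2, by rw [← p.2.1 a₀, ha₀, minimalPeriod_embedding_zero p.2.2], fun a => by
      rw [← p.2.1 a₀, ha₀, iterate_apply_embedding_zero p.2.2, p.2.1]⟩
  refine (Nat.card_eq_of_bijective forgetEmbedding ⟨?_, ?_⟩).symm
  · rintro ⟨⟨s, r⟩, hst, hsr⟩ ⟨⟨s', r'⟩, hst', hsr'⟩ heq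
    obtain rfl : r = r' := congrArg Subtype.val heq
    have zero_eq : s 0 = s' 0 := by rw [← ha₀, hst, hst']
    obtain rfl : s = s' := by
      ext i
      rw [← iterate_apply_embedding_zero hsr, zero_eq, iterate_apply_embedding_zero hsr']
    rfl
  · rintro ⟨r, hr, hrt⟩
    obtain ⟨s, hs, hsr⟩ := exists_embedding_of_minimalPeriod_eq hr
    exact ⟨⟨(s, r), fun a => (hs _).trans (hrt a), hsr⟩, rfl⟩

end CycleThrough

namespace IsPreBolsteringAt

variable {X : Type*} {r : Perm X} {u v w : X} {α β : ℕ}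

theorem minimalPeriod_w (h : IsPreBolsteringAt r u v w α β) (hv : r^[α + 1] u = v) :
    minimalPeriod r w = α + β + 3 := by
  have iterate_after_v (j : ℕ) : r^[j + (α + 2)] w = r^[j] v := by
    rw [iterate_add_apply, h.iterate_w_add_two, hv]
  refine minimalPeriod_eq_of_forall_iterate_ne (by omega) ?_ fun i hi₀ hi heq => ?_
  · rw [show α + β + 3 = (β + 1) + (α + 2) by omega, iterate_after_v]
    exact h.returns.elim And.right fun hw => absurd (hv.symm.trans hw.1) h.v_ne_w
  · obtain rfl | hu | rfl | hb : i = 1 ∨ (2 ≤ i ∧ i < α + 2) ∨ i = 0 + (α + 2) ∨ α + 2 < i := by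
      omega
    · exact h.u_ne_w (h.apply_w.symm.trans heq)
    · obtain ⟨i, rfl⟩ := Nat.exists_eq_add_of_le' hu.1
      rw [h.iterate_w_add_two] at heq
      exact h.excursion_u.iterate_notMem i (by omega) (by simp [heq])
    · exact h.v_ne_w (by rwa [iterate_after_v] at heq)
    · obtain ⟨j, rfl⟩ := Nat.exists_eq_add_of_le' (Nat.succ_le_of_lt hb)
      rw [show j + (α + 2).succ = (j + 1) + (α + 2) by omega, iterate_after_v] at heq
      exact h.excursion_v.iterate_notMem j (by omega) (by simp [heq])

theorem of_minimalPeriod (hr : minimalPeriod r w = α + β + 3) :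
    IsPreBolsteringAt r (r w) (r^[α + 2] w) w α β := by
  have iterate_eq_iff {i j : ℕ} (hi : i < α + β + 3) (hj : j < α + β + 3) :
      r^[i] w = r^[j] w ↔ i = j :=
    iterate_eq_iterate_iff_of_lt_minimalPeriod (hr ▸ hi) (hr ▸ hj)
  have mem_iff {i : ℕ} (hi : i < α + β + 3) :
      r^[i] w ∈ ({r w, r^[α + 2] w, w} : Set X) ↔ i = 1 ∨ i = α + 2 ∨ i = 0 := by
    rw [Set.mem_insert_iff, Set.mem_insert_iff, Set.mem_singleton_iff]
    exact or_congr (iterate_eq_iff hi (j := 1) (by omega)) (or_congr (iterate_eq_iff hi (by omega))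
      (iterate_eq_iff hi (j := 0) (by omega)))
  exact {
    u_ne_v := mt (iterate_eq_iff (i := 1) (by omega) (by omega)).mp (by omega)
    u_ne_w := mt (iterate_eq_iff (i := 1) (j := 0) (by omega) (by omega)).mp (by omega)
    v_ne_w := mt (iterate_eq_iff (j := 0) (by omega) (by omega)).mp (by omega)
    apply_w := rfl
    excursion_u :=
      { iterate_notMem i hi := mt (mem_iff (i := i + 2) (by omega)).mp (by omega)
        return_mem := (mem_iff (i := α + 2) (by omega)).mpr (by omega) }
    excursion_v :=
      { iterate_notMem i hi := by
          rw [← iterate_add_apply]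
          exact mt (mem_iff (by omega)).mp (by omega)
        return_mem := by
          rw [← iterate_add_apply, show β + 1 + (α + 2) = α + β + 3 by omega, ← hr,
            iterate_minimalPeriod]
          simp } }

theorem and_return_u_eq_v_iff : IsPreBolsteringAt r u v w α β ∧ r^[α + 1] u = v ↔
    minimalPeriod r w = α + β + 3 ∧ r w = u ∧ r^[α + 2] w = v := by
  constructor
  · rintro ⟨h, hv⟩
    exact ⟨h.minimalPeriod_w hv, h.apply_w, (h.iterate_w_add_two α).trans hv⟩
  · rintro ⟨hr, rfl, rfl⟩
    exact ⟨of_minimalPeriod hr, rfl⟩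

variable [Fintype X]

theorem card_le (h : IsPreBolsteringAt r u v w α β) : α + β + 3 ≤ Fintype.card X := by
  by_cases hv : r^[α + 1] u = v
  · rw [← h.minimalPeriod_w hv]
    exact minimalPeriod_le_card
  · rw [← h.swap_mul.minimalPeriod_w (h.swap_mul_return_u_eq_v_iff.mpr hv)]
    exact minimalPeriod_le_card

end IsPreBolsteringAt

section Counting

variable {X : Type*} [Fintype X] {u v w : X} {α β : ℕ}

theorem card_isPreBolsteringAt_return_u_eq_v (huv : u ≠ v) (huw : u ≠ w) (hvw : v ≠ w)
    (hαβ : α + β + 3 ≤ Fintype.card X) :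
    Nat.card {r : Perm X // r^[α + 1] u = v ∧ IsPreBolsteringAt r u v w α β} =
      (Fintype.card X - 3).factorial := by
  let time : Fin 3 ↪ Fin (α + β + 2 + 1) := ⟨![0, ⟨1, by omega⟩, ⟨α + 2, by omega⟩], by
    intro i j hij
    fin_cases i <;> fin_cases j <;> simp_all [Fin.ext_iff]⟩
  let point : Fin 3 ↪ X := ⟨![w, u, v], by
    intro i j hij
    fin_cases i <;> fin_cases j <;> simp_all [eq_comm]⟩
  have passes_iff (r : Perm X) :
      (∀ a, r^[time a] (point 0) = point a) ↔ r w = u ∧ r^[α + 2] w = v := by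
    rw [Fin.forall_fin_succ, Fin.forall_fin_two]
    exact and_iff_right rfl
  rw [← Fintype.card_fin 3, ← card_perm_cycle_through time point (a₀ := 0) rfl hαβ]
  refine Nat.card_congr (Equiv.subtypeEquivRight fun r => ?_)
  rw [and_comm, IsPreBolsteringAt.and_return_u_eq_v_iff, passes_iff]
  rfl

theorem card_isPreBolsteringAt (huv : u ≠ v) (huw : u ≠ w) (hvw : v ≠ w)
    (hαβ : α + β + 3 ≤ Fintype.card X) :
    Nat.card {r : Perm X // IsPreBolsteringAt r u v w α β} =
      2 * (Fintype.card X - 3).factorial := by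
  rw [← card_isPreBolsteringAt_return_u_eq_v huv huw hvw hαβ]
  exact card_subtype_eq_two_mul (Equiv.mulLeft (swap v w))
    (fun r => IsPreBolsteringAt.swap_mul_iff) fun r h => h.swap_mul_return_u_eq_v_iff

theorem index_mul_card_isPreBolsteringAt [DecidableEq X] {H : Subgroup (Perm X)}
    (hH : H = ⊤ ∨ H = alternatingGroup X) (huv : u ≠ v) (huw : u ≠ w) (hvw : v ≠ w)
    (hαβ : α + β + 3 ≤ Fintype.card X) :
    H.index * Nat.card {r : Perm X // r ∈ H ∧ IsPreBolsteringAt r u v w α β} =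
      2 * (Fintype.card X - 3).factorial := by
  have : Nontrivial X := ⟨u, v, huv⟩
  have top_or_index_two : H = ⊤ ∨ H.index = 2 ∧ swap v w ∉ H := hH.imp_right fun h => by
    subst h
    exact ⟨alternatingGroup.index_eq_two, by simp [Perm.mem_alternatingGroup, Perm.sign_swap hvw]⟩
  rw [← card_isPreBolsteringAt huv huw hvw hαβ]
  exact index_mul_card_subtype_mem top_or_index_two fun r => IsPreBolsteringAt.swap_mul_iff

end Counting

section Labeling

variable {n k k' : ℕ} {c r : Perm (Fin n)} {u v w : Fin n}

theorem coe_support_eq (hS : c.support = {u, v, w}) : (c.support : Set (Fin n)) = {u, v, w} := by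
  simp [hS]

theorem ne_of_support_eq (hc : c.IsThreeCycle) (hS : c.support = {u, v, w}) :
    u ≠ v ∧ u ≠ w ∧ v ≠ w := by
  have card_eq := hc.card_support
  rw [hS] at card_eq
  refine ⟨?_, ?_, ?_⟩ <;> rintro rfl
  · have := Finset.card_le_two (a := u) (b := w)
    simp_all
  · have := Finset.card_le_two (a := v) (b := u)
    simp_all
  · have := Finset.card_le_two (a := u) (b := v)
    simp_all

theorem exists_support_eq (hc : c.IsThreeCycle) : ∃ u v w, c.support = {u, v, w} := by
  obtain ⟨u, v, w, -, -, -, hS⟩ := Finset.card_eq_three.mp hc.card_support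
  exact ⟨u, v, w, hS⟩

theorem isKPreBolstering_iff (hc : c.IsThreeCycle) : IsKPreBolstering k c r ↔
    ∃ u v w α β, c.support = {u, v, w} ∧ 2 ≤ α ∧ 2 ≤ β ∧ k = α + β + 3 ∧
      IsPreBolsteringAt r u v w α β := by
  constructor
  · rintro ⟨u, v, w, α, β, a, b, hS, hα, hβ, hk, -, -, -, haS, hbS, hw, hu, hv, ha, hb, hlast⟩
    obtain ⟨huv, huw, hvw⟩ := ne_of_support_eq hc hS
    simp only [← Finset.mem_coe, coe_support_eq hS] at haS hbS
    refine ⟨u, v, w, α, β, hS, hα, hβ, hk, huv, huw, hvw, hw,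
      .of_path (by omega) haS hu ha ?_, .of_path (by omega) hbS hv hb ?_⟩
    · rcases hlast with h | h <;> simp [h]
    · rcases hlast with h | h <;> simp [h]
  · rintro ⟨u, v, w, α, β, hS, hα, hβ, hk, h⟩
    have notMem_support {x : Fin n} (hx : x ∉ ({u, v, w} : Set (Fin n))) : x ∉ c.support := by
      rwa [← Finset.mem_coe, coe_support_eq hS]
    refine ⟨u, v, w, α, β, fun i => r^[i + 1] u, fun j => r^[j + 1] v, hS, hα, hβ, hk,
      fun i hi j hj => h.excursion_u.iterate_injOn hi hj,
      fun i hi j hj => h.excursion_v.iterate_injOn hi hj,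
      fun i hi j hj => h.excursion_u.iterate_ne_iterate r.injective h.excursion_v
        (by simp) (by simp) h.u_ne_v hi.le hj.le,
      fun i hi => notMem_support (h.excursion_u.iterate_notMem i hi),
      fun j hj => notMem_support (h.excursion_v.iterate_notMem j hj),
      h.apply_w, rfl, rfl, fun i _ => (iterate_succ_apply' r _ u).symm,
      fun j _ => (iterate_succ_apply' r _ v).symm, ?_⟩
    simp only [← iterate_succ_apply' r, Nat.succ_eq_add_one, show α - 1 + 1 = α by omega,
      show β - 1 + 1 = β by omega]
    exact h.returns.symm

namespace IsKPreBolstering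

theorem unique (hc : c.IsThreeCycle) (h : IsKPreBolstering k c r)
    (h' : IsKPreBolstering k' c r) : k = k' := by
  obtain ⟨u, v, w, α, β, hS, hα, hβ, rfl, hat⟩ := (isKPreBolstering_iff hc).mp h
  obtain ⟨u', v', w', α', β', hS', -, -, rfl, hat'⟩ := (isKPreBolstering_iff hc).mp h'
  obtain ⟨-, rfl, rfl⟩ := hat.unique hat' (by omega) (by omega)
    ((coe_support_eq hS).symm.trans (coe_support_eq hS'))
  rfl

theorem le (hc : c.IsThreeCycle) (h : IsKPreBolstering k c r) : k ≤ n := by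
  obtain ⟨u, v, w, α, β, -, -, -, rfl, hat⟩ := (isKPreBolstering_iff hc).mp h
  simpa using hat.card_le

end IsKPreBolstering

theorem exists_lt_isKPreBolstering_iff (hc : c.IsThreeCycle) :
    (∃ k < k', IsKPreBolstering k c r) ↔
      IsPreBolstering c r ∧ ¬ ∃ k, k' ≤ k ∧ IsKPreBolstering k c r := by
  constructor
  · rintro ⟨k, hk, h⟩
    exact ⟨⟨k, h⟩, fun ⟨l, hl, h'⟩ => (h.unique hc h').not_lt (hk.trans_le hl)⟩
  · rintro ⟨⟨k, h⟩, hnot⟩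
    exact ⟨k, not_le.mp fun hk => hnot ⟨k, hk, h⟩, h⟩

end Labeling

theorem mul_card_exists_eq {ι Y : Type*} [Finite ι] [Finite Y] {P : ι → Y → Prop}
    (unique : ∀ i j y, P i y → P j y → i = j) {m N : ℕ}
    (hN : ∀ i, m * Nat.card {y // P i y} = N) :
    m * Nat.card {y // ∃ i, P i y} = Nat.card ι * N := by
  have := Fintype.ofFinite ι
  let forgetIndex (x : Σ i, {y // P i y}) : {y // ∃ i, P i y} := ⟨x.2, x.1, x.2.2⟩
  have bijective : Bijective forgetIndex := by
    refine ⟨?_, fun ⟨y, i, hy⟩ => ⟨⟨i, y, hy⟩, rfl⟩⟩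
    rintro ⟨i, y, hi⟩ ⟨j, y', hj⟩ heq
    obtain rfl : y = y' := congrArg Subtype.val heq
    obtain rfl := unique i j y hi hj
    rfl
  rw [← Nat.card_eq_of_bijective forgetIndex bijective, Nat.card_sigma, Finset.mul_sum,
    Finset.sum_congr rfl fun i _ => hN i, Finset.sum_const, Finset.card_univ, smul_eq_mul,
    Nat.card_eq_fintype_card]

/-- The pairs `(α - 2, β - 2)` for which a pre-bolstering element with excursion lengths `α` and `β`
is `k`-pre-bolstering with `k < q + 7`. -/
def lengthPairs (q : ℕ) : Finset (ℕ × ℕ) :=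
  (Finset.range q).biUnion Finset.HasAntidiagonal.antidiagonal

theorem mem_lengthPairs {q : ℕ} {t : ℕ × ℕ} : t ∈ lengthPairs q ↔ t.1 + t.2 < q := by
  simp [lengthPairs]

theorem two_mul_card_lengthPairs (q : ℕ) : 2 * (lengthPairs q).card = q * (q + 1) := by
  rw [lengthPairs, Finset.card_biUnion fun s _ s' _ hs =>
    Finset.disjoint_left.mpr (by simp; omega)]
  have := Finset.sum_range_id_mul_two (q + 1)
  rw [Finset.sum_range_succ'] at this
  simpa [mul_comm] using this

/-- The ways `(u, v, w)` to label the support of `c`. -/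
abbrev SupportLabeling {n : ℕ} (c : Perm (Fin n)) : Type :=
  {l : Fin n × Fin n × Fin n // c.support = {l.1, l.2.1, l.2.2}}

section Shares

variable {n q : ℕ} {c r : Perm (Fin n)} {H : Subgroup (Perm (Fin n))}

theorem exists_lt_isKPreBolstering_iff_exists_isPreBolsteringAt (hc : c.IsThreeCycle) :
    (∃ k < q + 7, IsKPreBolstering k c r) ↔ ∃ x : SupportLabeling c × lengthPairs q,
      IsPreBolsteringAt r x.1.1.1 x.1.1.2.1 x.1.1.2.2 (x.2.1.1 + 2) (x.2.1.2 + 2) := by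
  constructor
  · rintro ⟨k, hk, h⟩
    obtain ⟨u, v, w, α, β, hS, hα, hβ, rfl, hat⟩ := (isKPreBolstering_iff hc).mp h
    obtain ⟨α, rfl⟩ := Nat.exists_eq_add_of_le' hα
    obtain ⟨β, rfl⟩ := Nat.exists_eq_add_of_le' hβ
    exact ⟨(⟨(u, v, w), hS⟩, ⟨(α, β), mem_lengthPairs.mpr (by lia)⟩), hat⟩
  · rintro ⟨⟨⟨⟨u, v, w⟩, hS⟩, ⟨⟨α, β⟩, ht⟩⟩, hat⟩
    have := mem_lengthPairs.mp ht
    exact ⟨α + 2 + (β + 2) + 3, by lia,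
      (isKPreBolstering_iff hc).mpr ⟨u, v, w, _, _, hS, by omega, by omega, rfl, hat⟩⟩

theorem index_mul_card_exists_lt (hc : c.IsThreeCycle) (hH : H = ⊤ ∨ H = alternatingGroup (Fin n))
    (hq : q + 6 ≤ n) :
    H.index * Nat.card {r // r ∈ H ∧ ∃ k < q + 7, IsKPreBolstering k c r} =
      Nat.card (SupportLabeling c) * (q * (q + 1)) * (n - 3).factorial := by
  simp only [exists_lt_isKPreBolstering_iff_exists_isPreBolsteringAt hc, ← exists_and_left]
  rw [mul_card_exists_eq (N := 2 * (n - 3).factorial)]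
  · rw [Nat.card_prod, Nat.card_eq_fintype_card (α := lengthPairs q), Fintype.card_coe,
      ← two_mul_card_lengthPairs]
    ring
  · rintro ⟨⟨⟨u, v, w⟩, hS⟩, ⟨⟨α, β⟩, ht⟩⟩ ⟨⟨⟨u', v', w'⟩, hS'⟩, ⟨⟨α', β'⟩, ht'⟩⟩ r ⟨-, h⟩ ⟨-, h'⟩
    obtain ⟨⟨rfl, rfl, rfl⟩, hα, hβ⟩ := h.unique h' (by omega) (by omega)
      ((coe_support_eq hS).symm.trans (coe_support_eq hS'))
    obtain rfl : α = α' := by simpa using hα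
    obtain rfl : β = β' := by simpa using hβ
    rfl
  · rintro ⟨⟨⟨u, v, w⟩, hS⟩, ⟨⟨α, β⟩, ht⟩⟩
    obtain ⟨huv, huw, hvw⟩ := ne_of_support_eq hc hS
    have lt_q := mem_lengthPairs.mp ht
    rw [index_mul_card_isPreBolsteringAt hH huv huw hvw (by rw [Fintype.card_fin]; lia),
      Fintype.card_fin]

theorem exists_lt_isKPreBolstering_iff_isPreBolstering (hc : c.IsThreeCycle) (hn : 6 ≤ n) :
    (∃ k < n - 6 + 7, IsKPreBolstering k c r) ↔ IsPreBolstering c r :=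
  ⟨fun ⟨k, _, h⟩ => ⟨k, h⟩, fun ⟨k, h⟩ => ⟨k, by have := h.le hc; omega, h⟩⟩

theorem index_mul_card_isPreBolstering (hc : c.IsThreeCycle)
    (hH : H = ⊤ ∨ H = alternatingGroup (Fin n)) (hn : 6 ≤ n) :
    H.index * Nat.card {r // r ∈ H ∧ IsPreBolstering c r} =
      Nat.card (SupportLabeling c) * ((n - 6) * (n - 6 + 1)) * (n - 3).factorial := by
  simp only [← exists_lt_isKPreBolstering_iff_isPreBolstering hc hn]
  exact index_mul_card_exists_lt hc hH (Nat.sub_add_cancel hn).le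

theorem card_exists_lt_mul (hc : c.IsThreeCycle) (hH : H = ⊤ ∨ H = alternatingGroup (Fin n))
    (hq : q + 6 ≤ n) :
    Nat.card {r // r ∈ H ∧ ∃ k < q + 7, IsKPreBolstering k c r} * ((n - 6) * (n - 6 + 1)) =
      q * (q + 1) * Nat.card {r // r ∈ H ∧ IsPreBolstering c r} := by
  refine Nat.eq_of_mul_eq_mul_left (Nat.pos_of_ne_zero H.index_ne_zero_of_finite) ?_
  rw [← mul_assoc, index_mul_card_exists_lt hc hH hq,
    mul_left_comm H.index (q * (q + 1)), index_mul_card_isPreBolstering hc hH (by omega)]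
  ring

theorem nonempty_isPreBolstering (hc : c.IsThreeCycle)
    (hH : H = ⊤ ∨ H = alternatingGroup (Fin n)) (hn : 7 ≤ n) :
    Nonempty {r // r ∈ H ∧ IsPreBolstering c r} := by
  obtain ⟨u, v, w, hS⟩ := exists_support_eq hc
  have : Nonempty (SupportLabeling c) := ⟨⟨(u, v, w), hS⟩⟩
  have labelings_pos : 0 < Nat.card (SupportLabeling c) := Nat.card_pos
  have pos : 0 < n - 6 := by omega
  have count_pos : 0 < H.index * Nat.card {r // r ∈ H ∧ IsPreBolstering c r} := by
    rw [index_mul_card_isPreBolstering hc hH (by omega)]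
    positivity
  exact (Nat.card_pos_iff.mp (pos_of_mul_pos_right count_pos (Nat.zero_le _))).1

theorem card_not_exists_ge (hc : c.IsThreeCycle) (k' : ℕ) :
    Nat.card {t : {r // r ∈ H ∧ IsPreBolstering c r} //
        ¬ ∃ k, k' ≤ k ∧ IsKPreBolstering k c t.1} =
      Nat.card {r // r ∈ H ∧ ∃ k < k', IsKPreBolstering k c r} := by
  simp only [exists_lt_isKPreBolstering_iff hc, ← and_assoc]
  exact Nat.card_congr (Equiv.subtypeSubtypeEquivSubtypeInter
    (fun r => r ∈ H ∧ IsPreBolstering c r) fun r => ¬ ∃ k, k' ≤ k ∧ IsKPreBolstering k c r)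

theorem card_not_exists_ge_le_mul (hc : c.IsThreeCycle)
    (hH : H = ⊤ ∨ H = alternatingGroup (Fin n)) (hn : 7 ≤ n) (hq : q + 6 ≤ n) {x : ℝ}
    (hx : (q * (q + 1) : ℝ) ≤ x * (((n - 6 : ℕ) : ℝ) * ((n - 6 : ℕ) + 1))) :
    (Nat.card {t : {r // r ∈ H ∧ IsPreBolstering c r} //
        ¬ ∃ k, q + 7 ≤ k ∧ IsKPreBolstering k c t.1} : ℝ) ≤
      x * Nat.card {r // r ∈ H ∧ IsPreBolstering c r} := by
  have pos : 0 < n - 6 := by omega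
  have total_pos : (0 : ℝ) < ((n - 6 : ℕ) : ℝ) * ((n - 6 : ℕ) + 1) := by positivity
  refine le_of_mul_le_mul_right ?_ total_pos
  rw [card_not_exists_ge hc, mul_right_comm]
  calc _ = (q * (q + 1) : ℝ) * Nat.card {r // r ∈ H ∧ IsPreBolstering c r} :=
        mod_cast card_exists_lt_mul hc hH hq
    _ ≤ _ := by gcongr

end Shares

theorem one_sub_pow_le_card_exists_div_card {ι T : Type*} [Fintype ι] [DecidableEq ι] [Fintype T]
    [Nonempty T] (p : T → Prop) [DecidablePred fun f : ι → T => ∃ j, p (f j)] {x : ℝ}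
    (hx : (Nat.card {t // ¬ p t} : ℝ) ≤ x * Nat.card T) :
    1 - x ^ Fintype.card ι ≤
      ((Finset.univ.filter fun f : ι → T => ∃ j, p (f j)).card : ℝ) /
        (Fintype.card (ι → T) : ℝ) := by
  have card_never : (Finset.univ.filter fun f : ι → T => ¬ ∃ j, p (f j)).card =
      Nat.card {t // ¬ p t} ^ Fintype.card ι := by
    rw [← Fintype.card_subtype, ← Nat.card_eq_fintype_card, ← Nat.card_eq_fintype_card (α := ι),
      ← Nat.card_fun]
    exact Nat.card_congr ((Equiv.subtypeEquivRight fun f => not_exists).trans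
      (Equiv.subtypePiEquivPi (p := fun _ t => ¬ p t)))
  have card_split := Finset.card_filter_add_card_filter_not (s := (Finset.univ : Finset (ι → T)))
    (fun f => ∃ j, p (f j))
  rw [card_never, Finset.card_univ] at card_split
  have card_fun : (Fintype.card (ι → T) : ℝ) = (Nat.card T : ℝ) ^ Fintype.card ι := by
    rw [Fintype.card_fun, Nat.card_eq_fintype_card, Nat.cast_pow]
  have never_le : (Nat.card {t // ¬ p t} : ℝ) ^ Fintype.card ι ≤
      x ^ Fintype.card ι * Fintype.card (ι → T) := by
    rw [card_fun, ← mul_pow]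
    gcongr
  rw [le_div_iff₀ (by exact_mod_cast Fintype.card_pos), sub_mul, one_mul, ← card_split]
  rw [← card_split] at never_le
  push_cast at never_le ⊢
  linarith

theorem sq_pow_le_of_half_log_div_log_le {α ε : ℝ} {R : ℕ} (hα₀ : 0 < α) (hα₁ : α < 1)
    (hε : 0 < ε) (hR : 1 / 2 * (Real.log ε / Real.log α) ≤ R) : (α ^ 2) ^ R ≤ ε := by
  have log_bound : 2 * R * Real.log α ≤ Real.log ε :=
    (div_le_iff_of_neg (Real.log_neg hα₀ hα₁)).mp (by linarith)
  rw [← pow_mul, ← Real.log_le_log_iff (by positivity) hε, Real.log_pow]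
  exact_mod_cast log_bound

section Arithmetic

variable {α : ℝ}

theorem mul_sub_five_mul_mul_sub_four_le {x : ℝ} (hα₁ : √(1 / 2) ≤ α) (hα₂ : α ≤ 9 / 11)
    (hx : 9 ≤ x) : (α * x - 5) * (α * x - 4) ≤ α ^ 2 * ((x - 6) * (x - 6 + 1)) := by
  have seven_tenths_le : 7 / 10 ≤ α := (Real.le_sqrt' (by norm_num)).mpr (by norm_num) |>.trans hα₁
  have slope_nonneg : 0 ≤ α * (9 - 11 * α) * (x - 9) :=
    mul_nonneg (mul_nonneg (by linarith) (by linarith)) (by linarith)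
  have value_at_nine : 0 ≤ α * (9 - 11 * α) * 9 + 30 * α ^ 2 - 20 := by
    nlinarith [mul_nonneg (sub_nonneg.mpr seven_tenths_le) (sub_nonneg.mpr hα₂)]
  linarith

theorem add_six_le_of_add_seven_eq_max {n q : ℕ} (hn : 8 ≤ n) (hα : α ≤ 1)
    (hq : q + 7 = max 9 (⌈α * n⌉₊ + 1)) : q + 6 ≤ n := by
  have ceil_le : ⌈α * n⌉₊ ≤ n := Nat.ceil_le.mpr (mul_le_of_le_one_left n.cast_nonneg hα)
  omega

theorem mul_add_one_le_sq_mul_of_add_seven_eq_max {n q : ℕ} (hn : 9 ≤ n) (hα₁ : √(1 / 2) ≤ α)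
    (hα₂ : α ≤ 9 / 11) (hq : q + 7 = max 9 (⌈α * n⌉₊ + 1)) :
    (q * (q + 1) : ℝ) ≤ α ^ 2 * (((n - 6 : ℕ) : ℝ) * ((n - 6 : ℕ) + 1)) := by
  have hn' : (9 : ℝ) ≤ n := by exact_mod_cast hn
  have α_nonneg : 0 ≤ α := (Real.sqrt_nonneg _).trans hα₁
  rw [Nat.cast_sub (by omega : 6 ≤ n), Nat.cast_ofNat]
  rcases le_total 9 (⌈α * n⌉₊ + 1) with h | h
  · have q_add_six_lt : (q + 6 : ℝ) < α * n + 1 := by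
      have := Nat.ceil_lt_add_one (mul_nonneg α_nonneg n.cast_nonneg)
      rw [show ⌈α * n⌉₊ = q + 6 by omega] at this
      exact_mod_cast this
    calc (q * (q + 1) : ℝ)
      _ ≤ (α * n - 5) * (α * n - 4) := by apply mul_le_mul <;> linarith [q.cast_nonneg (α := ℝ)]
      _ ≤ α ^ 2 * ((n - 6) * (n - 6 + 1)) := mul_sub_five_mul_mul_sub_four_le hα₁ hα₂ hn'
  · obtain rfl : q = 2 := by omega
    have half_le_sq : 1 / 2 ≤ α ^ 2 := (Real.sqrt_le_left α_nonneg).mp hα₁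
    have twelve_le : (12 : ℝ) ≤ (n - 6) * (n - 6 + 1) := by nlinarith
    calc ((2 : ℕ) * ((2 : ℕ) + 1) : ℝ)
      _ = 1 / 2 * 12 := by norm_num
      _ ≤ α ^ 2 * ((n - 6) * (n - 6 + 1)) := by gcongr

end Arithmetic

-- Both bounds on `α` are natural: at `n = 9` exactly half of the pre-bolstering elements have
-- `k < 9`, which forces `1 / 2 ≤ α ^ 2`, and `α (9 - 11 α)` is the coefficient of `x` in the
-- difference of the two sides of `mul_sub_five_mul_mul_sub_four_le`.
theorem long_preBolstering_found_with_high_probability_general (n : ℕ) (hn : 9 ≤ n)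
    (H : Subgroup (Equiv.Perm (Fin n))) (hH : H = ⊤ ∨ H = alternatingGroup (Fin n))
    (c : Equiv.Perm (Fin n)) (hc : c.IsThreeCycle)
    (ε α : ℝ) (hε0 : 0 < ε) (hα1 : √(1 / 2) ≤ α) (hα2 : α ≤ 9 / 11)
    (R : ℕ) (hR : R = ⌈(1 / 2) * (Real.log ε / Real.log α)⌉₊) :
    1 - ε ≤
      ((Finset.univ.filter
          (fun f : Fin R → {r : Equiv.Perm (Fin n) // r ∈ H ∧ IsPreBolstering c r} =>
            ∃ j : Fin R, ∃ k, max 9 (⌈α * (n : ℝ)⌉₊ + 1) ≤ k ∧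
              IsKPreBolstering k c ((f j : Equiv.Perm (Fin n))))).card : ℝ) /
        (Fintype.card
          (Fin R → {r : Equiv.Perm (Fin n) // r ∈ H ∧ IsPreBolstering c r}) : ℝ) := by
  obtain ⟨q, hq⟩ := Nat.exists_eq_add_of_le'
    ((by norm_num : 7 ≤ 9).trans (le_max_left 9 (⌈α * n⌉₊ + 1)))
  have hqn : q + 6 ≤ n := add_six_le_of_add_seven_eq_max (by omega) (by linarith) hq.symm
  have short_le := card_not_exists_ge_le_mul hc hH (by omega) hqn
    (mul_add_one_le_sq_mul_of_add_seven_eq_max hn hα1 hα2 hq.symm)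
  have α_pos : 0 < α := (Real.sqrt_pos.mpr (by norm_num)).trans_le hα1
  have power_le : (α ^ 2) ^ R ≤ ε :=
    sq_pow_le_of_half_log_div_log_le α_pos (by linarith) hε0 (hR ▸ Nat.le_ceil _)
  have := nonempty_isPreBolstering hc hH (by omega)
  have share_hit := one_sub_pow_le_card_exists_div_card (ι := Fin R) _ short_le
  rw [Fintype.card_fin] at share_hit
  rw [hq]
  exact (sub_le_sub_left power_le 1).trans share_hit

/-- Let `n ≥ 9`, `G ∈ {Alt_n, Sym_n}`, `c ∈ G` a `3`-cycle, `0 < ε < 1`,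
`3/4 ≤ α ≤ 4/5` and `R = ⌈(1/2)·log_α ε⌉`.  Among all `R`-tuples of pre-bolstering elements
of `G` with respect to `c` (each tuple equally likely, modelling independent uniform random
pre-bolstering elements), the proportion of tuples containing an entry that is
`k`-pre-bolstering for some `k ≥ max(9, ⌈αn⌉ + 1)` is at least `1 − ε`. -/
theorem long_preBolstering_found_with_high_probability (n : ℕ) (hn : 9 ≤ n)
    (H : Subgroup (Equiv.Perm (Fin n))) (hH : H = ⊤ ∨ H = alternatingGroup (Fin n))
    (c : Equiv.Perm (Fin n)) (hcH : c ∈ H) (hc : c.IsThreeCycle)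
    (ε α : ℝ) (hε0 : 0 < ε) (hε1 : ε < 1) (hα1 : 3 / 4 ≤ α) (hα2 : α ≤ 4 / 5)
    (R : ℕ) (hR : R = ⌈(1 / 2) * (Real.log ε / Real.log α)⌉₊) :
    1 - ε ≤
      ((Finset.univ.filter
          (fun f : Fin R → {r : Equiv.Perm (Fin n) // r ∈ H ∧ IsPreBolstering c r} =>
            ∃ j : Fin R, ∃ k, max 9 (⌈α * (n : ℝ)⌉₊ + 1) ≤ k ∧
              IsKPreBolstering k c ((f j : Equiv.Perm (Fin n))))).card : ℝ) /
        (Fintype.card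
          (Fin R → {r : Equiv.Perm (Fin n) // r ∈ H ∧ IsPreBolstering c r}) : ℝ) :=
  long_preBolstering_found_with_high_probability_general n hn H hH c hc ε α hε0
    ((Real.sqrt_le_left (by linarith)).mpr (by nlinarith)) (by linarith) R hR
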